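/- (Aggregate optimal-value variance bound.) In the setting of the Q-EarlySettled-Advantage algorithm, for any δ ∈ (0,1), there is a universal constant C > 0 such that with probability at least 1 − δ: Σ_{h=1}^{H} Σ_{k=1}^{K} sqrt( Var_{h, s_h^k, a_h^k}(V_{h+1}^*) / N_h^k(s_h^k, a_h^k) ) ≤ C · ( sqrt(H²·S·A·T·log(SAT/δ)) + H^4·S·A·log(SAT/δ) ), where (s_h^k, a_h^k) is the state-action pair encountered at step h of episode k. -/

import Mathlib

open MeasureTheory Finset

/-- A finite-horizon MDP with horizon `H`, non-stationary transition kernels `P h s a ·`,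
and deterministic rewards `r h s a ∈ [0,1]`. -/
structure MDP (S A : Type) [Fintype S] [Fintype A] where
  H : ℕ
  P : ℕ → S → A → S → ℝ
  r : ℕ → S → A → ℝ
  H_pos : 1 ≤ H
  P_nonneg : ∀ h s a s', 0 ≤ P h s a s'
  P_sum_one : ∀ h s a, ∑ s', P h s a s' = 1
  r_nonneg : ∀ h s a, 0 ≤ r h s a
  r_le_one : ∀ h s a, r h s a ≤ 1

namespace MDP

variable {S A : Type} [Fintype S] [Fintype A] [Nonempty S] [Nonempty A]

/-- Optimal Q-function, defined by backward induction on the remaining number of steps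
(`Qstar` below instantiates the fuel as `H + 1 - h`, so that values at step `H + 1`
vanish and the Bellman optimality equation holds for `1 ≤ h ≤ H`). -/
noncomputable def QstarAux (M : MDP S A) : ℕ → ℕ → S → A → ℝ
  | 0, _, _, _ => 0
  | (fuel + 1), h, s, a =>
      M.r h s a + ∑ s' : S, M.P h s a s' *
        (Finset.univ.sup' Finset.univ_nonempty fun a' => QstarAux M fuel (h + 1) s' a')

/-- The optimal Q-function `Q_h^⋆`. -/
noncomputable def Qstar (M : MDP S A) (h : ℕ) (s : S) (a : A) : ℝ :=
  QstarAux M (M.H + 1 - h) h s a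

/-- The optimal value function `V_h^⋆`. -/
noncomputable def Vstar (M : MDP S A) (h : ℕ) (s : S) : ℝ :=
  Finset.univ.sup' Finset.univ_nonempty fun a => M.Qstar h s a

/-- Value function `V_h^π` of a deterministic policy `π`, by backward induction. -/
noncomputable def VpolAux (M : MDP S A) (π : ℕ → S → A) : ℕ → ℕ → S → ℝ
  | 0, _, _ => 0
  | (fuel + 1), h, s =>
      M.r h s (π h s) + ∑ s' : S, M.P h s (π h s) s' * VpolAux M π fuel (h + 1) s'

/-- The value function `V_h^π` of a deterministic policy `π`. -/
noncomputable def Vpol (M : MDP S A) (π : ℕ → S → A) (h : ℕ) (s : S) : ℝ :=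
  VpolAux M π (M.H + 1 - h) h s

/-- Conditional variance `Var_{h,s,a}(V) = P_{h,s,a}(V²) - (P_{h,s,a} V)²`. -/
noncomputable def varP (M : MDP S A) (h : ℕ) (s : S) (a : A) (V : S → ℝ) : ℝ :=
  (∑ s' : S, M.P h s a s' * (V s') ^ 2) - (∑ s' : S, M.P h s a s' * V s') ^ 2

end MDP

/-- The Q-learning rate `η_n = (H+1)/(H+n)`. -/
noncomputable def lr (H n : ℕ) : ℝ := (H + 1 : ℝ) / (H + n)

/-- `η_n^N`: equal to `η_n ∏_{i=n+1}^N (1 - η_i)` for `1 ≤ n ≤ N` (hence `η_n` for `N = n`),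
`0` for `N < n`, and `η_0^N = ∏_{i=1}^N (1 - η_i)` (which is `1` if `N = 0` and `0` otherwise,
since `1 - η_1 = 0`). -/
noncomputable def lrProd (H n N : ℕ) : ℝ :=
  if N < n then 0
  else (if n = 0 then 1 else lr H n) * ∏ i ∈ Finset.Icc (n + 1) N, (1 - lr H i)

/-- The log factor `log(SAT/δ)` with `T = KH`. -/
noncomputable def iota (S A : Type) [Fintype S] [Fintype A] (K H : ℕ) (δ : ℝ) : ℝ :=
  Real.log ((Fintype.card S : ℝ) * (Fintype.card A) * (K * H) / δ)

/-- The trajectory `(s_h^k, a_h^k)` is generated by online interaction with the MDP `M`: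
states and actions are adapted to the filtration `𝓕` (with time index `(k-1)H + h`
corresponding to step `h` of episode `k`), and conditionally on the history,
`s_{h+1}^k ∼ P_h(· | s_h^k, a_h^k)`. -/
def IsMDPTrajectory {S A : Type} [Fintype S] [Fintype A] [DecidableEq S]
    [MeasurableSpace S] [MeasurableSpace A]
    {Ω : Type} [m0 : MeasurableSpace Ω] (μ : Measure Ω)
    (M : MDP S A) (K : ℕ) (𝓕 : Filtration ℕ m0)
    (st : ℕ → ℕ → Ω → S) (ac : ℕ → ℕ → Ω → A) : Prop :=
  (∀ k ∈ Finset.Icc 1 K, ∀ h ∈ Finset.Icc 1 (M.H + 1),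
      Measurable[𝓕 ((k - 1) * M.H + h)] (st k h)) ∧
  (∀ k ∈ Finset.Icc 1 K, ∀ h ∈ Finset.Icc 1 M.H,
      Measurable[𝓕 ((k - 1) * M.H + h)] (ac k h)) ∧
  (∀ k ∈ Finset.Icc 1 K, ∀ h ∈ Finset.Icc 1 M.H, ∀ s' : S,
      μ[(fun ω => if st k (h + 1) ω = s' then (1 : ℝ) else 0) | 𝓕 ((k - 1) * M.H + h)]
        =ᵐ[μ] fun ω => M.P h (st k h ω) (ac k h ω) s')

/-- The **Q-EarlySettled-Advantage** algorithm (Algorithms 1–2 of the paper), run for `K`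
episodes on the MDP `M` with bonus constant `cb` and failure probability `δ`.
The fields record the trajectory `(s_h^k, a_h^k)`, the greedy policies `π^k`, the visit
counters, all Q/value estimates and auxiliary statistics, together with the initialization
and update equations defining the algorithm.  A quantity carrying episode index `k`
denotes its value at the *beginning* of episode `k` (`N k` is the counter at the *end*
of episode `k`, with `N 0 = 0`); `kvis n h s a` is the episode of the `n`-th visit of
`(s,a)` at step `h`. -/
structure QLAlg {S A : Type} [Fintype S] [Fintype A] [Nonempty S] [Nonempty A]
    [DecidableEq S] [DecidableEq A] (M : MDP S A) (K : ℕ) (cb δ : ℝ) where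
  /-- `s_h^k` : the state visited at step `h` of episode `k` -/
  st : ℕ → ℕ → S
  /-- `a_h^k` : the action taken at step `h` of episode `k` -/
  ac : ℕ → ℕ → A
  /-- `π^k` : the greedy policy executed during episode `k` -/
  pol : ℕ → ℕ → S → A
  /-- `N_h^k(s,a)` : number of visits of `(s,a)` at step `h` by the end of episode `k` -/
  N : ℕ → ℕ → S → A → ℕ
  /-- the combined Q-estimate `Q_h^k` -/
  Q : ℕ → ℕ → S → A → ℝ
  /-- the Hoeffding-bonus optimistic estimate `Q_h^{UCB,k}` -/
  QUCB : ℕ → ℕ → S → A → ℝ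
  /-- the pessimistic estimate `Q_h^{LCB,k}` -/
  QLCB : ℕ → ℕ → S → A → ℝ
  /-- the reference-advantage estimate `Q_h^{R,k}` -/
  QR : ℕ → ℕ → S → A → ℝ
  /-- `V_h^k` -/
  V : ℕ → ℕ → S → ℝ
  /-- `V_h^{LCB,k}` -/
  VLCB : ℕ → ℕ → S → ℝ
  /-- the reference value `V_h^{R,k}` -/
  VR : ℕ → ℕ → S → ℝ
  /-- the flag `u_ref^k` governing the final reference update -/
  uref : ℕ → ℕ → S → Prop
  /-- running mean `μ_h^{ref,k}` of the reference -/
  muRef : ℕ → ℕ → S → A → ℝ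
  /-- running second moment `σ_h^{ref,k}` of the reference -/
  sigRef : ℕ → ℕ → S → A → ℝ
  /-- running weighted mean `μ_h^{adv,k}` of the advantage -/
  muAdv : ℕ → ℕ → S → A → ℝ
  /-- running weighted second moment `σ_h^{adv,k}` of the advantage -/
  sigAdv : ℕ → ℕ → S → A → ℝ
  /-- the aggregated bonus `B_h^{R,k}` -/
  BR : ℕ → ℕ → S → A → ℝ
  /-- the bonus difference `δ_h^{R,k}` -/
  dR : ℕ → ℕ → S → A → ℝ
  /-- `bR k h` : the exploration bonus `b_h^R` computed at step `h` of episode `k` -/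
  bR : ℕ → ℕ → ℝ
  /-- `kvis n h s a = k_h^n(s,a)` : the episode of the `n`-th visit of `(s,a)` at step `h` -/
  kvis : ℕ → ℕ → S → A → ℕ
  greedy : ∀ k h s a, Q k h s a ≤ Q k h s (pol k h s)
  act_eq : ∀ k h, ac k h = pol k h (st k h)
  N_init : ∀ h s a, N 0 h s a = 0
  N_upd : ∀ k ∈ Icc 1 K, ∀ h ∈ Icc 1 M.H, ∀ s a,
    N k h s a = N (k - 1) h s a + (if s = st k h ∧ a = ac k h then 1 else 0)
  Q_init : ∀ h ∈ Icc 1 M.H, ∀ s a, Q 1 h s a = M.H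
  QUCB_init : ∀ h ∈ Icc 1 M.H, ∀ s a, QUCB 1 h s a = M.H
  QR_init : ∀ h ∈ Icc 1 M.H, ∀ s a, QR 1 h s a = M.H
  QLCB_init : ∀ h ∈ Icc 1 M.H, ∀ s a, QLCB 1 h s a = 0
  V_init : ∀ h ∈ Icc 1 M.H, ∀ s, V 1 h s = M.H
  VR_init : ∀ h ∈ Icc 1 M.H, ∀ s, VR 1 h s = M.H
  VLCB_init : ∀ h ∈ Icc 1 M.H, ∀ s, VLCB 1 h s = 0
  uref_init : ∀ h s, uref 1 h s
  mom_init : ∀ h s a, muRef 1 h s a = 0 ∧ sigRef 1 h s a = 0 ∧ muAdv 1 h s a = 0 ∧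
    sigAdv 1 h s a = 0 ∧ BR 1 h s a = 0 ∧ dR 1 h s a = 0
  V_terminal : ∀ k s, V k (M.H + 1) s = 0 ∧ VR k (M.H + 1) s = 0 ∧ VLCB k (M.H + 1) s = 0
  QUCB_upd : ∀ k ∈ Icc 1 K, ∀ h ∈ Icc 1 M.H, ∀ s a,
    QUCB (k + 1) h s a =
      if s = st k h ∧ a = ac k h then
        (1 - lr M.H (N k h s a)) * QUCB k h s a
          + lr M.H (N k h s a) *
            (M.r h s a + V k (h + 1) (st k (h + 1))
              + cb * Real.sqrt ((M.H : ℝ) ^ 3 * iota S A K M.H δ / (N k h s a)))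
      else QUCB k h s a
  QLCB_upd : ∀ k ∈ Icc 1 K, ∀ h ∈ Icc 1 M.H, ∀ s a,
    QLCB (k + 1) h s a =
      if s = st k h ∧ a = ac k h then
        (1 - lr M.H (N k h s a)) * QLCB k h s a
          + lr M.H (N k h s a) *
            (M.r h s a + VLCB k (h + 1) (st k (h + 1))
              - cb * Real.sqrt ((M.H : ℝ) ^ 3 * iota S A K M.H δ / (N k h s a)))
      else QLCB k h s a
  muRef_upd : ∀ k ∈ Icc 1 K, ∀ h ∈ Icc 1 M.H, ∀ s a,
    muRef (k + 1) h s a =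
      if s = st k h ∧ a = ac k h then
        (1 - 1 / (N k h s a : ℝ)) * muRef k h s a
          + (1 / (N k h s a : ℝ)) * VR k (h + 1) (st k (h + 1))
      else muRef k h s a
  sigRef_upd : ∀ k ∈ Icc 1 K, ∀ h ∈ Icc 1 M.H, ∀ s a,
    sigRef (k + 1) h s a =
      if s = st k h ∧ a = ac k h then
        (1 - 1 / (N k h s a : ℝ)) * sigRef k h s a
          + (1 / (N k h s a : ℝ)) * (VR k (h + 1) (st k (h + 1))) ^ 2
      else sigRef k h s a
  muAdv_upd : ∀ k ∈ Icc 1 K, ∀ h ∈ Icc 1 M.H, ∀ s a,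
    muAdv (k + 1) h s a =
      if s = st k h ∧ a = ac k h then
        (1 - lr M.H (N k h s a)) * muAdv k h s a
          + lr M.H (N k h s a) * (V k (h + 1) (st k (h + 1)) - VR k (h + 1) (st k (h + 1)))
      else muAdv k h s a
  sigAdv_upd : ∀ k ∈ Icc 1 K, ∀ h ∈ Icc 1 M.H, ∀ s a,
    sigAdv (k + 1) h s a =
      if s = st k h ∧ a = ac k h then
        (1 - lr M.H (N k h s a)) * sigAdv k h s a
          + lr M.H (N k h s a) *
              (V k (h + 1) (st k (h + 1)) - VR k (h + 1) (st k (h + 1))) ^ 2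
      else sigAdv k h s a
  BR_upd : ∀ k ∈ Icc 1 K, ∀ h ∈ Icc 1 M.H, ∀ s a,
    BR (k + 1) h s a =
      if s = st k h ∧ a = ac k h then
        cb * Real.sqrt (iota S A K M.H δ / (N k h s a)) *
          (Real.sqrt (sigRef (k + 1) h s a - (muRef (k + 1) h s a) ^ 2)
            + Real.sqrt (M.H) * Real.sqrt (sigAdv (k + 1) h s a - (muAdv (k + 1) h s a) ^ 2))
      else BR k h s a
  dR_upd : ∀ k ∈ Icc 1 K, ∀ h ∈ Icc 1 M.H, ∀ s a,
    dR (k + 1) h s a =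
      if s = st k h ∧ a = ac k h then BR (k + 1) h s a - BR k h s a else dR k h s a
  bR_def : ∀ k ∈ Icc 1 K, ∀ h ∈ Icc 1 M.H,
    bR k h = BR (k + 1) h (st k h) (ac k h)
      + (1 - lr M.H (N k h (st k h) (ac k h))) * dR (k + 1) h (st k h) (ac k h)
          / lr M.H (N k h (st k h) (ac k h))
      + cb * (M.H : ℝ) ^ 2 * iota S A K M.H δ
          / (N k h (st k h) (ac k h) : ℝ) ^ ((3 : ℝ) / 4)
  QR_upd : ∀ k ∈ Icc 1 K, ∀ h ∈ Icc 1 M.H, ∀ s a,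
    QR (k + 1) h s a =
      if s = st k h ∧ a = ac k h then
        (1 - lr M.H (N k h s a)) * QR k h s a
          + lr M.H (N k h s a) *
            (M.r h s a + V k (h + 1) (st k (h + 1)) - VR k (h + 1) (st k (h + 1))
              + muRef (k + 1) h s a + bR k h)
      else QR k h s a
  Q_upd : ∀ k ∈ Icc 1 K, ∀ h ∈ Icc 1 M.H, ∀ s a,
    Q (k + 1) h s a =
      if s = st k h ∧ a = ac k h then
        min (QR (k + 1) h s a) (min (QUCB (k + 1) h s a) (Q k h s a))
      else Q k h s a
  V_upd : ∀ k ∈ Icc 1 K, ∀ h ∈ Icc 1 M.H, ∀ s,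
    V (k + 1) h s =
      if s = st k h then Finset.univ.sup' Finset.univ_nonempty (fun a => Q (k + 1) h s a)
      else V k h s
  VLCB_upd : ∀ k ∈ Icc 1 K, ∀ h ∈ Icc 1 M.H, ∀ s,
    VLCB (k + 1) h s =
      if s = st k h then
        max (Finset.univ.sup' Finset.univ_nonempty (fun a => QLCB (k + 1) h s a)) (VLCB k h s)
      else VLCB k h s
  VR_upd_pos : ∀ k ∈ Icc 1 K, ∀ h ∈ Icc 1 M.H,
    (1 < V (k + 1) h (st k h) - VLCB (k + 1) h (st k h) ∨ uref k h (st k h)) →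
      VR (k + 1) h (st k h) = V (k + 1) h (st k h)
  VR_upd_neg : ∀ k ∈ Icc 1 K, ∀ h ∈ Icc 1 M.H,
    ¬(1 < V (k + 1) h (st k h) - VLCB (k + 1) h (st k h) ∨ uref k h (st k h)) →
      VR (k + 1) h (st k h) = VR k h (st k h)
  VR_upd_other : ∀ k ∈ Icc 1 K, ∀ h ∈ Icc 1 M.H, ∀ s, s ≠ st k h →
    VR (k + 1) h s = VR k h s
  uref_upd_pos : ∀ k ∈ Icc 1 K, ∀ h ∈ Icc 1 M.H,
    1 < V (k + 1) h (st k h) - VLCB (k + 1) h (st k h) → uref (k + 1) h (st k h)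
  uref_upd_neg : ∀ k ∈ Icc 1 K, ∀ h ∈ Icc 1 M.H,
    ¬(1 < V (k + 1) h (st k h) - VLCB (k + 1) h (st k h)) → ¬uref (k + 1) h (st k h)
  uref_upd_other : ∀ k ∈ Icc 1 K, ∀ h ∈ Icc 1 M.H, ∀ s, s ≠ st k h →
    (uref (k + 1) h s ↔ uref k h s)
  kvis_spec : ∀ h ∈ Icc 1 M.H, ∀ s a n, 1 ≤ n → n ≤ N K h s a →
    kvis n h s a ∈ Icc 1 K ∧ N (kvis n h s a) h s a = n ∧
      st (kvis n h s a) h = s ∧ ac (kvis n h s a) h = a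

set_option linter.unusedSectionVars false

namespace MDP

variable {S A : Type} [Fintype S] [Fintype A] [Nonempty S] [Nonempty A]

lemma QstarAux_bounds (M : MDP S A) (n : ℕ) : ∀ h s a,
    0 ≤ M.QstarAux n h s a ∧ M.QstarAux n h s a ≤ n := by
  induction n with
  | zero => intro h s a; simp [QstarAux]
  | succ n ih =>
    intro h s a
    have h1 : ∀ s' : S, 0 ≤ (Finset.univ.sup' Finset.univ_nonempty
        fun a' => QstarAux M n (h + 1) s' a') := by
      intro s'
      obtain ⟨a0⟩ := (inferInstance : Nonempty A)
      exact le_trans (ih (h+1) s' a0).1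
        (Finset.le_sup' (fun a' => QstarAux M n (h + 1) s' a') (Finset.mem_univ a0))
    have h2 : ∀ s' : S, (Finset.univ.sup' Finset.univ_nonempty
        fun a' => QstarAux M n (h + 1) s' a') ≤ n := by
      intro s'
      exact Finset.sup'_le _ _ (fun a' _ => (ih (h+1) s' a').2)
    rw [QstarAux]
    constructor
    · exact add_nonneg (M.r_nonneg h s a)
        (Finset.sum_nonneg fun s' _ => mul_nonneg (M.P_nonneg h s a s') (h1 s'))
    · have h3 : ∑ s' : S, M.P h s a s' * (Finset.univ.sup' Finset.univ_nonempty
        fun a' => QstarAux M n (h + 1) s' a') ≤ ∑ s' : S, M.P h s a s' * (n : ℝ) :=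
        Finset.sum_le_sum fun s' _ => mul_le_mul_of_nonneg_left (h2 s') (M.P_nonneg h s a s')
      rw [← Finset.sum_mul, M.P_sum_one, one_mul] at h3
      have := M.r_le_one h s a
      push_cast
      linarith

lemma Vstar_nonneg (M : MDP S A) (h : ℕ) (s : S) : 0 ≤ M.Vstar h s := by
  obtain ⟨a0⟩ := (inferInstance : Nonempty A)
  exact le_trans (M.QstarAux_bounds _ h s a0).1
    (Finset.le_sup' (fun a => M.Qstar h s a) (Finset.mem_univ a0))

lemma Vstar_le (M : MDP S A) (h : ℕ) (hh : 1 ≤ h) (s : S) : M.Vstar h s ≤ M.H := by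
  refine Finset.sup'_le _ _ (fun a _ => le_trans (M.QstarAux_bounds _ h s a).2 ?_)
  exact_mod_cast (by omega : M.H + 1 - h ≤ M.H)

lemma PV_le (M : MDP S A) (h : ℕ) (hh : h ≤ M.H) (s : S) (a : A) :
    ∑ s', M.P h s a s' * M.Vstar (h+1) s' ≤ M.Vstar h s := by
  have h1 : M.Qstar h s a = M.r h s a + ∑ s', M.P h s a s' * M.Vstar (h+1) s' := by
    have : M.H + 1 - h = (M.H + 1 - (h+1)) + 1 := by omega
    unfold Qstar
    rw [this, QstarAux]
    rfl
  have h2 : M.Qstar h s a ≤ M.Vstar h s :=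
    Finset.le_sup' (fun a => M.Qstar h s a) (Finset.mem_univ a)
  have := M.r_nonneg h s a
  linarith

/-- The potential `x² - 2Hx`. -/
noncomputable def gpot (M : MDP S A) (x : ℝ) : ℝ := x ^ 2 - 2 * M.H * x

/-- Martingale increment. -/
noncomputable def Dinc (M : MDP S A) (h : ℕ) (s : S) (a : A) (s' : S) : ℝ :=
  ∑ x, M.P h s a x * M.gpot (M.Vstar (h+1) x) - M.gpot (M.Vstar (h+1) s')

/-- Variance of the next optimal value. -/
noncomputable def vv (M : MDP S A) (h : ℕ) (s : S) (a : A) : ℝ :=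
  M.varP h s a (fun s' => M.Vstar (h + 1) s')

/-- Factor of the exponential supermartingale. -/
noncomputable def stepE (M : MDP S A) (h : ℕ) (s : S) (a : A) (s' : S) : ℝ :=
  Real.exp ((1 / (8 * (M.H:ℝ)^2)) * (M.Dinc h s a s' - M.vv h s a / 2))

lemma var_eq (M : MDP S A) (h : ℕ) (s : S) (a : A) (V : S → ℝ) (c : ℝ) :
    ∑ x, M.P h s a x * (V x - c) ^ 2 =
      M.varP h s a V + (∑ x, M.P h s a x * V x - c) ^ 2 := by
  have : ∀ x, M.P h s a x * (V x - c) ^ 2 =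
      M.P h s a x * (V x)^2 - 2 * c * (M.P h s a x * V x) + c ^ 2 * M.P h s a x := by
    intro x; ring
  simp_rw [this]
  rw [Finset.sum_add_distrib, Finset.sum_sub_distrib, ← Finset.mul_sum, ← Finset.mul_sum,
    M.P_sum_one, varP]
  ring

lemma varP_nonneg (M : MDP S A) (h : ℕ) (s : S) (a : A) (V : S → ℝ) : 0 ≤ M.varP h s a V := by
  have := M.var_eq h s a V (∑ x, M.P h s a x * V x)
  rw [sub_self] at this
  have h2 : 0 ≤ ∑ x, M.P h s a x * (V x - ∑ x, M.P h s a x * V x) ^ 2 :=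
    Finset.sum_nonneg fun x _ => mul_nonneg (M.P_nonneg _ _ _ _) (sq_nonneg _)
  linarith

lemma mean_le (M : MDP S A) (h : ℕ) (s : S) (a : A) (V : S → ℝ) (c : ℝ) (hV : ∀ x, V x ≤ c) :
    ∑ x, M.P h s a x * V x ≤ c := by
  calc _ ≤ ∑ x, M.P h s a x * c :=
        Finset.sum_le_sum fun x _ => mul_le_mul_of_nonneg_left (hV x) (M.P_nonneg _ _ _ _)
    _ = c := by rw [← Finset.sum_mul, M.P_sum_one, one_mul]

lemma le_mean (M : MDP S A) (h : ℕ) (s : S) (a : A) (V : S → ℝ) (c : ℝ) (hV : ∀ x, c ≤ V x) :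
    c ≤ ∑ x, M.P h s a x * V x := by
  calc c = ∑ x, M.P h s a x * c := by rw [← Finset.sum_mul, M.P_sum_one, one_mul]
    _ ≤ _ :=
        Finset.sum_le_sum fun x _ => mul_le_mul_of_nonneg_left (hV x) (M.P_nonneg _ _ _ _)

lemma gpot_bounds (M : MDP S A) (x : ℝ) (h0 : 0 ≤ x) (h1 : x ≤ M.H) :
    -(M.H:ℝ)^2 ≤ M.gpot x ∧ M.gpot x ≤ 0 := by
  unfold gpot
  constructor
  · nlinarith [sq_nonneg (x - M.H)]
  · nlinarith

lemma Dinc_abs (M : MDP S A) (h : ℕ) (s : S) (a : A) (s' : S) :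
    |M.Dinc h s a s'| ≤ (M.H:ℝ)^2 := by
  have hb : ∀ x, -(M.H:ℝ)^2 ≤ M.gpot (M.Vstar (h+1) x) ∧ M.gpot (M.Vstar (h+1) x) ≤ 0 :=
    fun x => M.gpot_bounds _ (M.Vstar_nonneg _ x) (M.Vstar_le _ (by omega) x)
  have h1 := M.mean_le h s a (fun x => M.gpot (M.Vstar (h+1) x)) 0 (fun x => (hb x).2)
  have h2 := M.le_mean h s a (fun x => M.gpot (M.Vstar (h+1) x)) _ (fun x => (hb x).1)
  have h3 := hb s'
  unfold Dinc
  rw [abs_le]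
  constructor <;> linarith

/-- One-step law of total variance. -/
lemma vv_le (M : MDP S A) (h : ℕ) (hh : h ≤ M.H) (h1 : 1 ≤ h) (s : S) (a : A) (s' : S) :
    M.vv h s a ≤ M.Dinc h s a s' + M.gpot (M.Vstar (h+1) s') - M.gpot (M.Vstar h s) := by
  have e : ∑ x, M.P h s a x * M.gpot (M.Vstar (h+1) x) =
      ∑ x, M.P h s a x * (M.Vstar (h+1) x)^2
        - 2 * M.H * ∑ x, M.P h s a x * M.Vstar (h+1) x := by
    rw [Finset.mul_sum, ← Finset.sum_sub_distrib]
    refine Finset.sum_congr rfl fun x _ => ?_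
    unfold gpot; ring
  have hP := M.PV_le h hh s a
  have hV := M.Vstar_le h h1 s
  unfold Dinc vv varP
  rw [e]
  unfold gpot
  nlinarith

lemma sum_sq_Dinc (M : MDP S A) (h : ℕ) (s : S) (a : A) :
    ∑ x, M.P h s a x * (M.Dinc h s a x) ^ 2 ≤ 4 * (M.H:ℝ)^2 * M.vv h s a := by
  set m := ∑ x, M.P h s a x * M.Vstar (h+1) x with hm
  have e1 := M.var_eq h s a (fun x => M.gpot (M.Vstar (h+1) x))
    (∑ x, M.P h s a x * M.gpot (M.Vstar (h+1) x))
  have e2 := M.var_eq h s a (fun x => M.gpot (M.Vstar (h+1) x)) (M.gpot m)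
  have e3 := M.var_eq h s a (fun x => M.Vstar (h+1) x) m
  have hm0 : 0 ≤ m := M.le_mean h s a _ 0 (fun x => M.Vstar_nonneg _ x)
  have hm1 : m ≤ M.H := M.mean_le h s a _ _ (fun x => M.Vstar_le _ (by omega) x)
  have e4 : ∑ x, M.P h s a x * (M.Dinc h s a x) ^ 2 =
    ∑ x, M.P h s a x * (M.gpot (M.Vstar (h+1) x)
      - ∑ x, M.P h s a x * M.gpot (M.Vstar (h+1) x)) ^ 2 := by
    refine Finset.sum_congr rfl fun x _ => ?_
    unfold Dinc; ring
  have e5 : ∑ x, M.P h s a x * (M.gpot (M.Vstar (h+1) x) - M.gpot m) ^ 2 ≤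
      ∑ x, 4 * (M.H:ℝ)^2 * (M.P h s a x * (M.Vstar (h+1) x - m) ^ 2) := by
    refine Finset.sum_le_sum fun x _ => ?_
    have hx0 := M.Vstar_nonneg (h+1) x
    have hx1 := M.Vstar_le (h+1) (by omega) x
    have : (M.gpot (M.Vstar (h+1) x) - M.gpot m) ^ 2 ≤
        4 * (M.H:ℝ)^2 * (M.Vstar (h+1) x - m) ^ 2 := by
      have e : (M.gpot (M.Vstar (h+1) x) - M.gpot m) ^ 2 =
          (M.Vstar (h+1) x + m - 2 * M.H) ^ 2 * (M.Vstar (h+1) x - m) ^ 2 := by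
        unfold gpot; ring
      rw [e]
      refine mul_le_mul_of_nonneg_right ?_ (sq_nonneg _)
      nlinarith
    calc _ ≤ M.P h s a x * (4 * (M.H:ℝ)^2 * (M.Vstar (h+1) x - m) ^ 2) :=
          mul_le_mul_of_nonneg_left this (M.P_nonneg _ _ _ _)
      _ = _ := by ring
  rw [← Finset.mul_sum] at e5
  rw [e3] at e5
  have : (∑ x, M.P h s a x * M.Vstar (h+1) x - m) ^ 2 = 0 := by rw [← hm]; simp
  rw [this, add_zero] at e5
  rw [sub_self] at e1
  have := sq_nonneg (∑ x, M.P h s a x * M.gpot (M.Vstar (h+1) x) - M.gpot m)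
  rw [e4, e1]
  unfold vv
  linarith

lemma H_real_pos (M : MDP S A) : (1:ℝ) ≤ M.H := by exact_mod_cast M.H_pos

lemma stepE_pos (M : MDP S A) (h : ℕ) (s : S) (a : A) (s' : S) : 0 < M.stepE h s a s' :=
  Real.exp_pos _

lemma lam_D (M : MDP S A) (h : ℕ) (s : S) (a : A) (s' : S) :
    |(1 / (8 * (M.H:ℝ)^2)) * M.Dinc h s a s'| ≤ 1 := by
  have hH := M.H_real_pos
  have hD := M.Dinc_abs h s a s'
  rw [abs_mul, abs_of_nonneg (by positivity), one_div, inv_mul_le_iff₀ (by positivity)]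
  nlinarith

lemma stepE_le (M : MDP S A) (h : ℕ) (s : S) (a : A) (s' : S) :
    M.stepE h s a s' ≤ Real.exp 1 := by
  unfold stepE
  apply Real.exp_le_exp.mpr
  have h1 := (abs_le.mp (M.lam_D h s a s')).2
  have h2 : 0 ≤ M.vv h s a := M.varP_nonneg _ _ _ _
  have hH := M.H_real_pos
  have : 0 ≤ 1 / (8 * (M.H:ℝ)^2) * (M.vv h s a / 2) := by positivity
  rw [mul_sub]; linarith

lemma stepE_sum (M : MDP S A) (h : ℕ) (s : S) (a : A) :
    ∑ x, M.P h s a x * M.stepE h s a x ≤ 1 := by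
  have hH := M.H_real_pos
  set l : ℝ := 1 / (8 * (M.H:ℝ)^2) with hl
  have hl0 : 0 < l := by positivity
  have e1 : ∑ x, M.P h s a x * Real.exp (l * M.Dinc h s a x) ≤
      ∑ x, (M.P h s a x + l * (M.P h s a x * M.Dinc h s a x)
        + l ^ 2 * (M.P h s a x * (M.Dinc h s a x)^2)) := by
    refine Finset.sum_le_sum fun x _ => ?_
    have h1 := Real.abs_exp_sub_one_sub_id_le (M.lam_D h s a x)
    rw [← hl] at h1
    have h2 := (abs_le.mp h1).2
    have h3 : Real.exp (l * M.Dinc h s a x) ≤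
      1 + l * M.Dinc h s a x + (l * M.Dinc h s a x)^2 := by linarith
    have := mul_le_mul_of_nonneg_left h3 (M.P_nonneg h s a x)
    calc _ ≤ _ := this
      _ = _ := by ring
  have e2 : ∑ x, M.P h s a x * M.Dinc h s a x = 0 := by
    unfold Dinc
    simp_rw [mul_sub]
    rw [Finset.sum_sub_distrib, ← Finset.sum_mul, M.P_sum_one, one_mul, sub_self]
  rw [Finset.sum_add_distrib, Finset.sum_add_distrib, ← Finset.mul_sum, ← Finset.mul_sum,
    M.P_sum_one, e2] at e1
  have e3 := M.sum_sq_Dinc h s a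
  have e4 : l ^ 2 * (4 * (M.H:ℝ)^2 * M.vv h s a) = l * (M.vv h s a / 2) := by
    rw [hl]; field_simp; ring
  have e5 : ∑ x, M.P h s a x * Real.exp (l * M.Dinc h s a x) ≤ Real.exp (l * (M.vv h s a / 2)) := by
    have := mul_le_mul_of_nonneg_left e3 (sq_nonneg l)
    have := Real.add_one_le_exp (l * (M.vv h s a / 2))
    linarith
  have e6 : ∑ x, M.P h s a x * M.stepE h s a x =
      (∑ x, M.P h s a x * Real.exp (l * M.Dinc h s a x)) * Real.exp (-(l * (M.vv h s a / 2))) := by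
    rw [Finset.sum_mul]
    refine Finset.sum_congr rfl fun x _ => ?_
    unfold stepE
    rw [mul_assoc, ← Real.exp_add, ← hl]
    congr 2; ring
  rw [e6]
  calc _ ≤ Real.exp (l * (M.vv h s a / 2)) * Real.exp (-(l * (M.vv h s a / 2))) :=
        mul_le_mul_of_nonneg_right e5 (Real.exp_pos _).le
    _ = 1 := by rw [← Real.exp_add]; simp

/-- Per-episode total variance bound. -/
lemma episode_bound (M : MDP S A) (st : ℕ → S) (ac : ℕ → A) :
    ∑ h ∈ Icc 1 M.H, M.vv h (st h) (ac h) ≤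
      (M.H:ℝ)^2 + ∑ h ∈ Icc 1 M.H, M.Dinc h (st h) (ac h) (st (h+1)) := by
  have key : ∀ n, n ≤ M.H → ∑ h ∈ Icc 1 n, M.vv h (st h) (ac h) ≤
      ∑ h ∈ Icc 1 n, M.Dinc h (st h) (ac h) (st (h+1)) + M.gpot (M.Vstar (n+1) (st (n+1)))
        - M.gpot (M.Vstar 1 (st 1)) := by
    intro n
    induction n with
    | zero => intro _; simp
    | succ n ih =>
      intro hn
      rw [Finset.sum_Icc_succ_top (by omega), Finset.sum_Icc_succ_top (by omega)]
      have := ih (by omega)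
      have := M.vv_le (n+1) hn (by omega) (st (n+1)) (ac (n+1)) (st (n+1+1))
      linarith
  have h1 := key M.H le_rfl
  have h2 := (M.gpot_bounds _ (M.Vstar_nonneg (M.H+1) (st (M.H+1)))
    (M.Vstar_le (M.H+1) (by omega) (st (M.H+1)))).2
  have h3 := (M.gpot_bounds _ (M.Vstar_nonneg 1 (st 1)) (M.Vstar_le 1 le_rfl (st 1))).1
  linarith

end MDP

lemma sum_range_shift (g : ℕ → ℝ) (n : ℕ) :
    ∑ x ∈ range n, g (x + 1) = ∑ h ∈ Icc 1 n, g h := by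
  induction n with
  | zero => simp
  | succ n ih => rw [Finset.sum_range_succ, ih, Finset.sum_Icc_succ_top (by omega)]

lemma sum_range_mul_eq (H : ℕ) (hH : 0 < H) (f : ℕ → ℕ → ℝ) (K : ℕ) :
    ∑ i ∈ range (K * H), f (i / H + 1) (i % H + 1) = ∑ k ∈ Icc 1 K, ∑ h ∈ Icc 1 H, f k h := by
  induction K with
  | zero => simp
  | succ K ih =>
    rw [Finset.sum_Icc_succ_top (by omega), ← ih, add_mul, one_mul, Finset.sum_range_add]
    congr 1
    rw [← sum_range_shift]
    refine Finset.sum_congr rfl fun x hx => ?_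
    have hx' := Finset.mem_range.mp hx
    rw [add_comm (K * H) x, Nat.add_mul_div_right _ _ hH, Nat.div_eq_of_lt hx', zero_add,
      Nat.add_mul_mod_self_right, Nat.mod_eq_of_lt hx']

/-- Pull-out + transition law: one step of integration. -/
lemma integral_step {S : Type} [Fintype S] [DecidableEq S]
    [MeasurableSpace S] [MeasurableSingletonClass S]
    {Ω : Type} {m m0 : MeasurableSpace Ω} (hm : m ≤ m0) (μ : Measure Ω) [IsProbabilityMeasure μ]
    (X : Ω → S) (hX : Measurable[m0] X) (P : S → Ω → ℝ)
    (hP : ∀ s', μ[(fun ω => if X ω = s' then (1 : ℝ) else 0) | m] =ᵐ[μ] P s')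
    (L : Ω → ℝ) (hL : Measurable[m] L) (hL0 : ∀ ω, 0 ≤ L ω) (B : ℝ) (hLB : ∀ ω, L ω ≤ B)
    (F : S → Ω → ℝ) (hF : ∀ s', Measurable[m] (F s')) (hF0 : ∀ s' ω, 0 ≤ F s' ω)
    (B' : ℝ) (hFB : ∀ s' ω, F s' ω ≤ B')
    (hsum : ∀ ω, ∑ s', P s' ω * F s' ω ≤ 1) :
    ∫ ω, L ω * F (X ω) ω ∂μ ≤ ∫ ω, L ω ∂μ := by
  have hindm : ∀ s', Measurable[m0] (fun ω => if X ω = s' then (1 : ℝ) else 0) := fun s' =>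
    Measurable.ite (hX (measurableSet_singleton s')) measurable_const measurable_const
  have hindi : ∀ s', Integrable (fun ω => if X ω = s' then (1 : ℝ) else 0) μ := fun s' =>
    Integrable.of_bound (hindm s').aestronglyMeasurable 1
      (Filter.Eventually.of_forall fun ω => by split_ifs <;> simp)
  have hLi : Integrable L μ := Integrable.of_bound
    (hL.mono hm le_rfl).aestronglyMeasurable B
    (Filter.Eventually.of_forall fun ω => by
      rw [Real.norm_eq_abs, abs_of_nonneg (hL0 ω)]; exact hLB ω)
  have hLF : ∀ s', StronglyMeasurable[m] (fun ω => L ω * F s' ω) := fun s' =>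
    (hL.mul (hF s')).stronglyMeasurable
  have hLFb : ∀ s' ω, ‖L ω * F s' ω‖ ≤ B * B' := fun s' ω => by
    rw [Real.norm_eq_abs, abs_of_nonneg (mul_nonneg (hL0 ω) (hF0 s' ω))]
    exact mul_le_mul (hLB ω) (hFB s' ω) (hF0 s' ω) ((hL0 ω).trans (hLB ω))
  have hprodi : ∀ s', Integrable
      ((fun ω => L ω * F s' ω) * (fun ω => if X ω = s' then (1 : ℝ) else 0)) μ := fun s' =>
    (hindi s').bdd_mul ((hLF s').mono hm).aestronglyMeasurable
      (Filter.Eventually.of_forall (hLFb s'))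
  have hce : ∀ s', μ[(fun ω => L ω * F s' ω) * (fun ω => if X ω = s' then (1 : ℝ) else 0) | m]
      =ᵐ[μ] fun ω => L ω * F s' ω * P s' ω := fun s' => by
    refine (condExp_mul_of_stronglyMeasurable_left (hLF s') (hprodi s') (hindi s')).trans ?_
    filter_upwards [hP s'] with ω h
    simp only [Pi.mul_apply]
    rw [h]
  have hce_i : ∀ s', Integrable (fun ω => L ω * F s' ω * P s' ω) μ := fun s' =>
    (integrable_condExp).congr (hce s')
  have hint : ∀ s', ∫ ω, L ω * F s' ω * (if X ω = s' then (1 : ℝ) else 0) ∂μ =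
      ∫ ω, L ω * F s' ω * P s' ω ∂μ := fun s' => by
    rw [← integral_congr_ae (hce s'), integral_condExp hm]
    rfl
  have hexp : ∀ ω, L ω * F (X ω) ω = ∑ s', L ω * F s' ω * (if X ω = s' then (1 : ℝ) else 0) := by
    intro ω
    simp
  calc ∫ ω, L ω * F (X ω) ω ∂μ
      = ∑ s', ∫ ω, L ω * F s' ω * (if X ω = s' then (1 : ℝ) else 0) ∂μ := by
        simp_rw [hexp]
        exact integral_finsetSum _ (fun s' _ => hprodi s')
    _ = ∫ ω, ∑ s', L ω * F s' ω * P s' ω ∂μ := by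
        simp_rw [hint]
        exact (integral_finsetSum _ (fun s' _ => hce_i s')).symm
    _ ≤ ∫ ω, L ω ∂μ := by
        refine integral_mono (integrable_finsetSum _ fun s' _ => hce_i s') hLi fun ω => ?_
        have e : ∑ s', L ω * F s' ω * P s' ω = L ω * ∑ s', P s' ω * F s' ω := by
          rw [Finset.mul_sum]
          exact Finset.sum_congr rfl fun x _ => by ring
        simp only [e]
        exact mul_le_of_le_one_right (hL0 ω) (hsum ω)

section traj

variable {S A : Type} [Fintype S] [Fintype A] [Nonempty S] [Nonempty A]
  [DecidableEq S] [DecidableEq A]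

/-- The exponential supermartingale along the trajectory. -/
noncomputable def Lproc {Ω : Type} (M : MDP S A)
    (st : ℕ → ℕ → Ω → S) (ac : ℕ → ℕ → Ω → A) (n : ℕ) (ω : Ω) : ℝ :=
  ∏ i ∈ range n, M.stepE (i % M.H + 1) (st (i / M.H + 1) (i % M.H + 1) ω)
    (ac (i / M.H + 1) (i % M.H + 1) ω) (st (i / M.H + 1) (i % M.H + 1 + 1) ω)

lemma Lproc_nonneg {Ω : Type} (M : MDP S A)
    (st : ℕ → ℕ → Ω → S) (ac : ℕ → ℕ → Ω → A) (n : ℕ) (ω : Ω) : 0 ≤ Lproc M st ac n ω :=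
  Finset.prod_nonneg fun _ _ => (M.stepE_pos _ _ _ _).le

lemma Lproc_le {Ω : Type} (M : MDP S A)
    (st : ℕ → ℕ → Ω → S) (ac : ℕ → ℕ → Ω → A) (n : ℕ) (ω : Ω) :
    Lproc M st ac n ω ≤ Real.exp 1 ^ n := by
  calc Lproc M st ac n ω ≤ ∏ _i ∈ range n, Real.exp 1 :=
        Finset.prod_le_prod (fun _ _ => (M.stepE_pos _ _ _ _).le)
          (fun _ _ => M.stepE_le _ _ _ _)
    _ = Real.exp 1 ^ n := by simp

variable [MeasurableSpace S] [MeasurableSingletonClass S]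
  [MeasurableSpace A] [MeasurableSingletonClass A]

lemma Lproc_main {Ω : Type} [m0 : MeasurableSpace Ω] (μ : Measure Ω) [IsProbabilityMeasure μ]
    (M : MDP S A) (K : ℕ) (𝓕 : Filtration ℕ m0)
    (st : ℕ → ℕ → Ω → S) (ac : ℕ → ℕ → Ω → A) (hT : IsMDPTrajectory μ M K 𝓕 st ac) (n : ℕ) :
    n ≤ K * M.H → Measurable[𝓕 (n + 1)] (Lproc M st ac n) ∧ ∫ ω, Lproc M st ac n ω ∂μ ≤ 1 := by
  obtain ⟨hst, hac, hP⟩ := hT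
  have hH : 0 < M.H := M.H_pos
  induction n with
  | zero =>
    intro _
    constructor
    · have : Lproc M st ac 0 = fun _ => (1:ℝ) := by funext ω; simp [Lproc]
      rw [this]; exact measurable_const
    · simp [Lproc]
  | succ n ih =>
    intro hn
    obtain ⟨ih1, ih2⟩ := ih (by omega)
    have hk : n / M.H + 1 ∈ Icc 1 K := by
      have : n / M.H < K := Nat.div_lt_of_lt_mul (by rw [mul_comm]; omega)
      simp; omega
    have hmod : n % M.H < M.H := Nat.mod_lt _ hH
    have hh : n % M.H + 1 ∈ Icc 1 M.H := by simp; omega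
    have htime : (n / M.H + 1 - 1) * M.H + (n % M.H + 1) = n + 1 := by
      have := Nat.div_add_mod n M.H
      rw [Nat.add_sub_cancel, mul_comm]; omega
    have m1 := hst _ hk (n % M.H + 1) (by simp; omega)
    have m2 := hac _ hk _ hh
    have m3 := hst _ hk (n % M.H + 1 + 1) (by simp; omega)
    have p := hP _ hk _ hh
    have htime2 : (n / M.H + 1 - 1) * M.H + (n % M.H + 1 + 1) = n + 1 + 1 := by omega
    rw [htime] at m1 m2 p
    rw [htime2] at m3
    have hF : ∀ (m : MeasurableSpace Ω) (f : S → A → S → ℝ) (X : Ω → S) (Y : Ω → A) (Z : Ω → S),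
        Measurable[m] X → Measurable[m] Y → Measurable[m] Z →
        Measurable[m] (fun ω => f (X ω) (Y ω) (Z ω)) := by
      intro m f X Y Z hX hY hZ
      have : Measurable (fun q : S × A × S => f q.1 q.2.1 q.2.2) := measurable_of_finite _
      exact this.comp (hX.prodMk (hY.prodMk hZ))
    have hsucc : ∀ ω, Lproc M st ac (n+1) ω = Lproc M st ac n ω *
        M.stepE (n % M.H + 1) (st (n / M.H + 1) (n % M.H + 1) ω)
          (ac (n / M.H + 1) (n % M.H + 1) ω) (st (n / M.H + 1) (n % M.H + 1 + 1) ω) := by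
      intro ω; unfold Lproc; rw [Finset.prod_range_succ]
    have hle : 𝓕 (n+1) ≤ 𝓕 (n+1+1) := 𝓕.mono (by omega)
    constructor
    · rw [funext hsucc]
      exact (ih1.mono hle le_rfl).mul
        (hF _ (M.stepE (n % M.H + 1)) _ _ _ (m1.mono hle le_rfl) (m2.mono hle le_rfl) m3)
    · simp_rw [hsucc]
      refine le_trans ?_ ih2
      exact integral_step (𝓕.le (n+1)) μ (st (n / M.H + 1) (n % M.H + 1 + 1))
        (m3.mono (𝓕.le _) le_rfl)
        (fun s' ω => M.P (n % M.H + 1) (st (n / M.H + 1) (n % M.H + 1) ω)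
          (ac (n / M.H + 1) (n % M.H + 1) ω) s') p
        (Lproc M st ac n) ih1 (fun ω => Lproc_nonneg M st ac n ω) _
        (fun ω => Lproc_le M st ac n ω)
        (fun s' ω => M.stepE (n % M.H + 1) (st (n / M.H + 1) (n % M.H + 1) ω)
          (ac (n / M.H + 1) (n % M.H + 1) ω) s')
        (fun s' => hF _ (M.stepE (n % M.H + 1)) _ _ _ m1 m2 measurable_const)
        (fun s' ω => (M.stepE_pos _ _ _ _).le) _ (fun s' ω => M.stepE_le _ _ _ _)
        (fun ω => M.stepE_sum _ _ _)

lemma Lproc_good {Ω : Type} [m0 : MeasurableSpace Ω] (μ : Measure Ω) [IsProbabilityMeasure μ]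
    (M : MDP S A) (K : ℕ) (𝓕 : Filtration ℕ m0)
    (st : ℕ → ℕ → Ω → S) (ac : ℕ → ℕ → Ω → A) (hT : IsMDPTrajectory μ M K 𝓕 st ac)
    (δ : ℝ) (hδ : 0 < δ) :
    1 - δ ≤ (μ {ω | Lproc M st ac (K * M.H) ω < 1 / δ}).toReal := by
  obtain ⟨hm, hi⟩ := Lproc_main μ M K 𝓕 st ac hT (K * M.H) le_rfl
  have hm' : Measurable (Lproc M st ac (K * M.H)) := hm.mono (𝓕.le _) le_rfl
  have hint : Integrable (Lproc M st ac (K * M.H)) μ :=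
    Integrable.of_bound hm'.aestronglyMeasurable (Real.exp 1 ^ (K * M.H))
    (Filter.Eventually.of_forall fun ω => by
      rw [Real.norm_eq_abs, abs_of_nonneg (Lproc_nonneg M st ac _ ω)]; exact Lproc_le M st ac _ ω)
  have hmk := mul_meas_ge_le_integral_of_nonneg
    (Filter.Eventually.of_forall fun ω => Lproc_nonneg M st ac (K * M.H) ω) hint (1 / δ)
  have hbad : μ.real {ω | 1 / δ ≤ Lproc M st ac (K * M.H) ω} ≤ δ := by
    have h1 := hmk.trans hi
    rw [one_div, inv_mul_le_iff₀ hδ] at h1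
    simpa using h1
  have hset : MeasurableSet {ω | 1 / δ ≤ Lproc M st ac (K * M.H) ω} :=
    measurableSet_le measurable_const hm'
  have hc : {ω | Lproc M st ac (K * M.H) ω < 1 / δ} =
      {ω | 1 / δ ≤ Lproc M st ac (K * M.H) ω}ᶜ := by ext ω; simp
  change 1 - δ ≤ μ.real _
  rw [hc, probReal_compl_eq_one_sub hset]
  linarith

/-- On the good event, the total variance is controlled. -/
lemma total_var {Ω : Type} (M : MDP S A) (K : ℕ)
    (st : ℕ → ℕ → Ω → S) (ac : ℕ → ℕ → Ω → A) (δ : ℝ) (hδ : 0 < δ) (ω : Ω)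
    (hω : Lproc M st ac (K * M.H) ω < 1 / δ) :
    ∑ k ∈ Icc 1 K, ∑ h ∈ Icc 1 M.H, M.vv h (st k h ω) (ac k h ω) ≤
      2 * (M.H:ℝ)^2 * K + 16 * (M.H:ℝ)^2 * Real.log (1 / δ) := by
  have hH := M.H_real_pos
  have e1 : Lproc M st ac (K * M.H) ω = Real.exp ((1 / (8 * (M.H:ℝ)^2)) *
      (∑ k ∈ Icc 1 K, ∑ h ∈ Icc 1 M.H, M.Dinc h (st k h ω) (ac k h ω) (st k (h+1) ω) -
       (∑ k ∈ Icc 1 K, ∑ h ∈ Icc 1 M.H, M.vv h (st k h ω) (ac k h ω)) / 2)) := by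
    have := sum_range_mul_eq M.H M.H_pos (fun k h => (1 / (8 * (M.H:ℝ)^2)) *
      (M.Dinc h (st k h ω) (ac k h ω) (st k (h+1) ω) - M.vv h (st k h ω) (ac k h ω) / 2)) K
    unfold Lproc MDP.stepE
    rw [← Real.exp_sum, this]
    simp_rw [← Finset.mul_sum, Finset.sum_sub_distrib, ← Finset.sum_div]
  rw [e1, ← Real.lt_log_iff_exp_lt (by positivity), one_div (8 * _),
    inv_mul_lt_iff₀ (by positivity)] at hω
  have h2 : ∑ k ∈ Icc 1 K, ∑ h ∈ Icc 1 M.H, M.vv h (st k h ω) (ac k h ω) ≤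
      ∑ k ∈ Icc 1 K, ((M.H:ℝ)^2 +
        ∑ h ∈ Icc 1 M.H, M.Dinc h (st k h ω) (ac k h ω) (st k (h+1) ω)) :=
    Finset.sum_le_sum fun k _ => M.episode_bound (fun h => st k h ω) (fun h => ac k h ω)
  rw [Finset.sum_add_distrib] at h2
  simp only [Finset.sum_const, Nat.card_Icc, Nat.add_sub_cancel, nsmul_eq_mul] at h2
  linarith

end traj

section counts

variable {S A : Type} [Fintype S] [Fintype A] [Nonempty S] [Nonempty A]
  [DecidableEq S] [DecidableEq A]

lemma QLAlg.N_le {M : MDP S A} {K : ℕ} {cb δ : ℝ} (al : QLAlg M K cb δ) (h : ℕ)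
    (hh : h ∈ Icc 1 M.H) (s : S) (a : A) (k : ℕ) : k ≤ K → al.N k h s a ≤ k := by
  induction k with
  | zero => intro _; simp [al.N_init]
  | succ k ih =>
    intro hk
    rw [al.N_upd (k+1) (by simp; omega) h hh, Nat.add_sub_cancel]
    have := ih (by omega)
    split_ifs <;> omega

lemma QLAlg.sum_inv {M : MDP S A} {K : ℕ} {cb δ : ℝ} (al : QLAlg M K cb δ) (h : ℕ)
    (hh : h ∈ Icc 1 M.H) (n : ℕ) : n ≤ K →
    ∑ k ∈ Icc 1 n, (1 / (al.N k h (al.st k h) (al.ac k h) : ℝ)) =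
      ∑ s, ∑ a, ((harmonic (al.N n h s a) : ℚ) : ℝ) := by
  induction n with
  | zero => intro _; simp [al.N_init]
  | succ n ih =>
    intro hn
    have hmem : n + 1 ∈ Icc 1 K := by simp; omega
    rw [Finset.sum_Icc_succ_top (by omega), ih (by omega)]
    have key : ∀ s a, ((harmonic (al.N (n+1) h s a) : ℚ) : ℝ) = (harmonic (al.N n h s a) : ℚ) +
        if s = al.st (n+1) h then (if a = al.ac (n+1) h then
          (1 / (al.N (n+1) h (al.st (n+1) h) (al.ac (n+1) h) : ℝ)) else 0) else 0 := by
      intro s a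
      have hu := al.N_upd (n+1) hmem h hh s a
      rw [Nat.add_sub_cancel] at hu
      by_cases h1 : s = al.st (n+1) h
      · by_cases h2 : a = al.ac (n+1) h
        · rw [if_pos h1, if_pos h2, ← h1, ← h2, hu, if_pos ⟨h1, h2⟩, harmonic_succ]
          push_cast
          rw [one_div]
        · rw [if_pos h1, if_neg h2, hu, if_neg (fun q => h2 q.2)]; simp
      · rw [if_neg h1, hu, if_neg (fun q => h1 q.1)]; simp
    simp_rw [key, Finset.sum_add_distrib]
    simp

lemma QLAlg.sum_inv_le {M : MDP S A} {K : ℕ} {cb δ : ℝ} (al : QLAlg M K cb δ) (hK : 1 ≤ K)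
    (h : ℕ) (hh : h ∈ Icc 1 M.H) :
    ∑ k ∈ Icc 1 K, (1 / (al.N k h (al.st k h) (al.ac k h) : ℝ)) ≤
      Fintype.card S * Fintype.card A * (1 + Real.log K) := by
  rw [al.sum_inv h hh K le_rfl]
  have hb : ∀ s a, ((harmonic (al.N K h s a) : ℚ) : ℝ) ≤ 1 + Real.log K := by
    intro s a
    have hN := al.N_le h hh s a K le_rfl
    rcases Nat.eq_zero_or_pos (al.N K h s a) with h0 | h0
    · rw [h0]; simp
      have := Real.log_nonneg (by exact_mod_cast hK : (1:ℝ) ≤ K)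
      linarith
    · refine (harmonic_le_one_add_log _).trans ?_
      have := Real.log_le_log (by exact_mod_cast h0) (by exact_mod_cast hN : (al.N K h s a : ℝ) ≤ K)
      linarith
  calc _ ≤ ∑ _s : S, ∑ _a : A, (1 + Real.log K) :=
        Finset.sum_le_sum fun s _ => Finset.sum_le_sum fun a _ => hb s a
    _ = _ := by simp; ring

/-- Deterministic final bound given the control of the total variance. -/
lemma QLAlg.final {M : MDP S A} {K : ℕ} {cb δ : ℝ} (al : QLAlg M K cb δ) (hK : 1 ≤ K)
    (hδ : 0 < δ) (hδ1 : δ < 1)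
    (hW : ∑ k ∈ Icc 1 K, ∑ h ∈ Icc 1 M.H, M.vv h (al.st k h) (al.ac k h) ≤
      2 * (M.H:ℝ)^2 * K + 16 * (M.H:ℝ)^2 * Real.log (1 / δ)) :
    ∑ h ∈ Icc 1 M.H, ∑ k ∈ Icc 1 K,
      Real.sqrt (M.vv h (al.st k h) (al.ac k h) / (al.N k h (al.st k h) (al.ac k h) : ℝ))
      ≤ 6 * (Real.sqrt ((M.H : ℝ) ^ 2 * (Fintype.card S) * (Fintype.card A)
                      * (K * M.H) * iota S A K M.H δ)
                  + (M.H : ℝ) ^ 4 * (Fintype.card S) * (Fintype.card A)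
                      * iota S A K M.H δ) := by
  have hH := M.H_real_pos
  have hS1 : (1:ℝ) ≤ Fintype.card S := by exact_mod_cast Fintype.card_pos
  have hA1 : (1:ℝ) ≤ Fintype.card A := by exact_mod_cast Fintype.card_pos
  have hK1 : (1:ℝ) ≤ K := by exact_mod_cast hK
  set s : ℝ := (Fintype.card S : ℝ) with hs
  set a : ℝ := (Fintype.card A : ℝ) with ha
  set H : ℝ := (M.H : ℝ) with hHdef
  set ι := iota S A K M.H δ with hι
  have hlogδ : 0 ≤ Real.log (1 / δ) := Real.log_nonneg (by rw [le_div_iff₀ hδ]; linarith)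
  have hlogK : 0 ≤ Real.log K := Real.log_nonneg hK1
  have hιeq : ι = Real.log s + Real.log a + (Real.log K + Real.log H) + Real.log (1/δ) := by
    rw [hι, iota, ← hs, ← ha, ← hHdef, div_eq_mul_one_div, Real.log_mul (by positivity) (by positivity),
      Real.log_mul (by positivity) (by positivity), Real.log_mul (by positivity) (by positivity),
      Real.log_mul (by positivity) (by positivity)]
  have hlogs := Real.log_nonneg hS1
  have hloga := Real.log_nonneg hA1
  have hlogH := Real.log_nonneg hH
  have hι0 : 0 ≤ ι := by rw [hιeq]; positivity
  rcases Nat.lt_or_ge (Fintype.card S) 2 with hc | hc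
  · have hsub : Fintype.card S ≤ 1 := by omega
    have hss : Subsingleton S := Fintype.card_le_one_iff_subsingleton.mp hsub
    have hz : ∀ h x y, M.vv h x y = 0 := by
      intro h x y
      have hp := M.P_sum_one h x y
      have := uniqueOfSubsingleton x
      unfold MDP.vv MDP.varP
      simp only [Fintype.sum_subsingleton _ x] at hp ⊢
      rw [hp]; ring
    simp only [hz, zero_div, Real.sqrt_zero, Finset.sum_const_zero]
    positivity
  · have hs2 : Real.log 2 ≤ Real.log s := Real.log_le_log (by norm_num) (by rw [hs]; exact_mod_cast hc)
    have hl2 := Real.log_two_gt_d9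
    have hι1 : 1 + Real.log K ≤ 2 * ι := by rw [hιeq]; linarith
    have hι2 : Real.log (1/δ) ≤ ι := by rw [hιeq]; linarith
    have hCS : ∑ h ∈ Icc 1 M.H, ∑ k ∈ Icc 1 K,
      Real.sqrt (M.vv h (al.st k h) (al.ac k h) / (al.N k h (al.st k h) (al.ac k h) : ℝ)) ≤
      Real.sqrt (∑ k ∈ Icc 1 K, ∑ h ∈ Icc 1 M.H, M.vv h (al.st k h) (al.ac k h)) *
      Real.sqrt (∑ h ∈ Icc 1 M.H, ∑ k ∈ Icc 1 K,
        (1 / (al.N k h (al.st k h) (al.ac k h) : ℝ))) := by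
      rw [Finset.sum_comm (s := Icc 1 K)]
      simp_rw [← Finset.sum_product']
      have := Real.sum_sqrt_mul_sqrt_le (Icc 1 M.H ×ˢ Icc 1 K)
        (f := fun p => M.vv p.1 (al.st p.2 p.1) (al.ac p.2 p.1))
        (g := fun p => 1 / (al.N p.2 p.1 (al.st p.2 p.1) (al.ac p.2 p.1) : ℝ))
        (fun p => M.varP_nonneg _ _ _ _) (fun p => by positivity)
      refine le_trans (le_of_eq ?_) this
      refine Finset.sum_congr rfl fun p _ => ?_
      have h0 : 0 ≤ M.vv p.1 (al.st p.2 p.1) (al.ac p.2 p.1) := M.varP_nonneg _ _ _ _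
      rw [← Real.sqrt_mul h0, mul_one_div]
    have hR : ∑ h ∈ Icc 1 M.H, ∑ k ∈ Icc 1 K,
        (1 / (al.N k h (al.st k h) (al.ac k h) : ℝ)) ≤ H * (s * a * (2 * ι)) := by
      calc _ ≤ ∑ h ∈ Icc 1 M.H, (s * a * (2 * ι)) := by
            refine Finset.sum_le_sum fun h hh => (al.sum_inv_le hK h hh).trans ?_
            exact mul_le_mul_of_nonneg_left hι1 (by positivity)
        _ = _ := by simp [hHdef]
    have hW' : ∑ k ∈ Icc 1 K, ∑ h ∈ Icc 1 M.H, M.vv h (al.st k h) (al.ac k h) ≤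
        2 * H^2 * K + 16 * H^2 * ι := by
      have : 16 * H^2 * Real.log (1/δ) ≤ 16 * H^2 * ι := mul_le_mul_of_nonneg_left hι2 (by positivity)
      linarith
    refine hCS.trans ?_
    refine (mul_le_mul (Real.sqrt_le_sqrt hW') (Real.sqrt_le_sqrt hR) (Real.sqrt_nonneg _)
      (Real.sqrt_nonneg _)).trans ?_
    rw [← Real.sqrt_mul (by positivity)]
    set X := H^2 * s * a * (K * H) * ι with hX
    have hX0 : 0 ≤ X := by positivity
    set Y := H^4 * s * a * ι with hY
    have hY0 : 0 ≤ Y := by positivity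
    refine Real.sqrt_le_iff.mpr ⟨by positivity, ?_⟩
    have e1 : (2 * H^2 * K + 16 * H^2 * ι) * (H * (s * a * (2 * ι))) =
        4 * X + 32 * (H^3 * (s * a) * ι^2) := by rw [hX]; ring
    have e2 : H^3 * (s * a) * ι^2 ≤ Y^2 := by
      have : Y^2 = H^8 * (s*a)^2 * ι^2 := by rw [hY]; ring
      rw [this]
      have h1 : H^3 ≤ H^8 := pow_le_pow_right₀ hH (by norm_num)
      have h2 : 1 ≤ s * a := one_le_mul_of_one_le_of_one_le hS1 hA1
      have h3 : s * a ≤ (s*a)^2 := by nlinarith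
      exact mul_le_mul_of_nonneg_right (mul_le_mul h1 h3 (by positivity) (by positivity))
        (sq_nonneg _)
    rw [e1]
    have e3 := Real.sq_sqrt hX0
    have e4 := mul_nonneg (Real.sqrt_nonneg X) hY0
    nlinarith [sq_nonneg Y]

end counts

/-- **Aggregate optimal-value variance bound** (eq. (106) of the paper).
There is a universal constant `C > 0` such that for any MDP, any `δ ∈ (0,1)`, any
bonus constant `cb > 0`, with probability at least `1 - δ` over the trajectories of the
Q-EarlySettled-Advantage algorithm,
`∑_{h=1}^H ∑_{k=1}^K √(Var_{h,s_h^k,a_h^k}(V⋆_{h+1}) / N_h^k(s_h^k,a_h^k))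
  ≤ C (√(H² S A T log(SAT/δ)) + H⁴ S A log(SAT/δ))` with `T = KH`. -/
theorem aggregate_variance_bound_of_QEarlySettledAdvantage :
    ∃ C : ℝ, 0 < C ∧
      ∀ (S A : Type) [Fintype S] [Fintype A] [Nonempty S] [Nonempty A]
        [DecidableEq S] [DecidableEq A]
        [MeasurableSpace S] [MeasurableSingletonClass S]
        [MeasurableSpace A] [MeasurableSingletonClass A]
        (M : MDP S A) (K : ℕ) (cb δ : ℝ)
        (Ω : Type) (m0 : MeasurableSpace Ω) (μ : Measure Ω)
        (𝓕 : Filtration ℕ m0) (alg : Ω → QLAlg M K cb δ),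
        IsProbabilityMeasure μ → 0 < δ → δ < 1 → 1 ≤ K → 0 < cb →
        IsMDPTrajectory μ M K 𝓕 (fun k h ω => (alg ω).st k h)
          (fun k h ω => (alg ω).ac k h) →
        1 - δ ≤ (μ {ω |
            ∑ h ∈ Icc 1 M.H, ∑ k ∈ Icc 1 K,
                Real.sqrt (M.varP h ((alg ω).st k h) ((alg ω).ac k h)
                    (fun s' => M.Vstar (h + 1) s')
                  / ((alg ω).N k h ((alg ω).st k h) ((alg ω).ac k h) : ℝ))
              ≤ C * (Real.sqrt ((M.H : ℝ) ^ 2 * (Fintype.card S) * (Fintype.card A)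
                      * (K * M.H) * iota S A K M.H δ)
                  + (M.H : ℝ) ^ 4 * (Fintype.card S) * (Fintype.card A)
                      * iota S A K M.H δ)}).toReal := by
  refine ⟨6, by norm_num, ?_⟩
  intro S A _ _ _ _ _ _ _ _ _ _ M K cb δ Ω m0 μ 𝓕 alg hμ hδ hδ1 hK _ hT
  have hgood := Lproc_good μ M K 𝓕 _ _ hT δ hδ
  refine hgood.trans (ENNReal.toReal_mono (measure_ne_top μ _) (measure_mono ?_))
  intro ω hω
  exact (alg ω).final hK hδ hδ1 (total_var M K (fun k h ω => (alg ω).st k h)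
    (fun k h ω => (alg ω).ac k h) δ hδ ω hω)
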